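/- Let (X, Y) be bivariate normal with mean zero, unit variances, and correlation ρ ∈ [0, 1). Then for all w > 0, P(⌊X/w⌋ = ⌊Y/w⌋) ≥ P(⌊X/w⌋ = ⌊Y/w⌋ at ρ' ) whenever ρ ≥ ρ' ≥ 0; in particular, for any w > 0, P_w(ρ) ≥ P_w(0) = 2∑_{i=0}^∞(Φ((i+1)w) - Φ(iw))². -/

import Mathlib

open MeasureTheory ProbabilityTheory Real Set

/-- Standard normal density. -/
noncomputable def stdPdf (x : ℝ) : ℝ := (Real.sqrt (2 * Real.pi))⁻¹ * Real.exp (-x ^ 2 / 2)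

/-- Standard normal CDF. -/
noncomputable def Phi (x : ℝ) : ℝ := ∫ t in Set.Iic x, stdPdf t

/-- The standard Gaussian measure on the real line. -/
local notation "γ" => gaussianReal 0 1

lemma charFunDual_stdGaussian (L : StrongDual ℝ ℝ) :
    charFunDual γ L = Complex.exp (((-(L 1) ^ 2 / 2 : ℝ)) : ℂ) := by
  rw [charFunDual_eq_charFun_map_one, gaussianReal_map_continuousLinearMap, charFun_gaussianReal]
  congr 1
  simp [max_eq_left (sq_nonneg (L 1)), neg_div]

/-- A linear combination of two independent standard Gaussians is a scaled standard Gaussian. -/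
lemma map_linearCombination_stdGaussian (a b c : ℝ) (h : a ^ 2 + b ^ 2 = c ^ 2) :
    ((γ).prod γ).map (fun p : ℝ × ℝ => a * p.1 + b * p.2) = (γ).map (fun x => c * x) := by
  let L : ℝ × ℝ →L[ℝ] ℝ :=
    a • ContinuousLinearMap.fst ℝ ℝ ℝ + b • ContinuousLinearMap.snd ℝ ℝ ℝ
  let M : ℝ →L[ℝ] ℝ := c • ContinuousLinearMap.id ℝ ℝ
  change ((γ).prod γ).map L = (γ).map M
  refine Measure.ext_of_charFunDual (funext fun K => ?_)
  have hK (x : ℝ) : K x = x * K 1 := by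
    rw [← smul_eq_mul, ← map_smul, smul_eq_mul, mul_one]
  rw [charFunDual_map, charFunDual_map, charFunDual_prod, charFunDual_stdGaussian,
    charFunDual_stdGaussian, charFunDual_stdGaussian, ← Complex.exp_add, ← Complex.ofReal_add]
  congr 2
  simp only [ContinuousLinearMap.comp_apply, ContinuousLinearMap.inl_apply,
    ContinuousLinearMap.inr_apply, L, M, add_apply,
    smul_apply, ContinuousLinearMap.coe_fst', ContinuousLinearMap.coe_snd',
    ContinuousLinearMap.id_apply, smul_eq_mul, mul_one, mul_zero, add_zero, zero_add]
  rw [hK a, hK b, hK c]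
  linear_combination (-(K 1) ^ 2 / 2) * h

/-- The bivariate Gaussian with correlation `ρ ≥ 0` can be realized by two conditionally
independent coordinates sharing a common Gaussian factor. -/
lemma map_correlated_eq_map_common_factor (ρ : ℝ) (h0 : 0 ≤ ρ) (h1 : ρ ≤ 1) :
    ((γ).prod γ).map (fun p : ℝ × ℝ => (p.1, ρ * p.1 + √(1 - ρ ^ 2) * p.2)) =
    ((γ).prod ((γ).prod γ)).map (fun q : ℝ × ℝ × ℝ =>
      (√ρ * q.1 + √(1 - ρ) * q.2.1, √ρ * q.1 + √(1 - ρ) * q.2.2)) := by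
  let f := ContinuousLinearMap.fst ℝ ℝ ℝ
  let s := ContinuousLinearMap.snd ℝ ℝ ℝ
  let f' := ContinuousLinearMap.fst ℝ ℝ (ℝ × ℝ)
  let s' := ContinuousLinearMap.snd ℝ ℝ (ℝ × ℝ)
  let L : ℝ × ℝ →L[ℝ] ℝ × ℝ := f.prod (ρ • f + √(1 - ρ ^ 2) • s)
  let M : ℝ × ℝ × ℝ →L[ℝ] ℝ × ℝ :=
    (√ρ • f' + √(1 - ρ) • f.comp s').prod (√ρ • f' + √(1 - ρ) • s.comp s')
  change ((γ).prod γ).map L = ((γ).prod ((γ).prod γ)).map M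
  refine Measure.ext_of_charFunDual (funext fun K => ?_)
  have hK (x y : ℝ) : K (x, y) = x * K (1, 0) + y * K (0, 1) := by
    rw [← smul_eq_mul, ← smul_eq_mul, ← map_smul, ← map_smul, ← map_add]
    simp
  have e1 : √ρ ^ 2 = ρ := sq_sqrt h0
  have e2 : √(1 - ρ) ^ 2 = 1 - ρ := sq_sqrt (by linarith)
  have e3 : √(1 - ρ ^ 2) ^ 2 = 1 - ρ ^ 2 := sq_sqrt (by nlinarith)
  rw [charFunDual_map, charFunDual_map, charFunDual_prod, charFunDual_prod, charFunDual_prod]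
  simp only [charFunDual_stdGaussian, ← Complex.exp_add, ← Complex.ofReal_add]
  congr 2
  simp only [ContinuousLinearMap.comp_apply, ContinuousLinearMap.inl_apply,
    ContinuousLinearMap.inr_apply, L, M, f, s, f', s', add_apply,
    ContinuousLinearMap.prod_apply,
    smul_apply, ContinuousLinearMap.coe_fst', ContinuousLinearMap.coe_snd',
    smul_eq_mul, Prod.fst_zero, Prod.snd_zero, mul_one, mul_zero, add_zero, zero_add]
  rw [hK 1 ρ, hK 0 √(1 - ρ ^ 2), hK √ρ √ρ, hK √(1 - ρ) 0, hK 0 √(1 - ρ)]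
  linear_combination (-(K (0, 1)) ^ 2 / 2) * e3 + ((K (1, 0) + K (0, 1)) ^ 2 / 2) * e1
    + ((K (1, 0)) ^ 2 / 2 + (K (0, 1)) ^ 2 / 2) * e2

/-- The Ornstein–Uhlenbeck operator with coefficient `c`, applied to the indicator of `A`. -/
noncomputable def ouProb (A : Set ℝ) (c z : ℝ) : ENNReal :=
  γ {n : ℝ | c * z + √(1 - c ^ 2) * n ∈ A}

lemma measurable_ouProb {A : Set ℝ} (hA : MeasurableSet A) (c : ℝ) : Measurable (ouProb A c) := by
  have h : MeasurableSet {p : ℝ × ℝ | c * p.1 + √(1 - c ^ 2) * p.2 ∈ A} :=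
    (by fun_prop : Measurable fun p : ℝ × ℝ => c * p.1 + √(1 - c ^ 2) * p.2) hA
  exact measurable_measure_prodMk_left h

lemma correlated_square_eq_lintegral {A : Set ℝ} (hA : MeasurableSet A) {ρ : ℝ} (h0 : 0 ≤ ρ)
    (h1 : ρ ≤ 1) :
    ((γ).prod γ) {p : ℝ × ℝ | p.1 ∈ A ∧ ρ * p.1 + √(1 - ρ ^ 2) * p.2 ∈ A} =
      ∫⁻ z, ouProb A (√ρ) z ^ 2 ∂γ := by
  have hm := congrArg (fun μ => μ (A ×ˢ A)) (map_correlated_eq_map_common_factor ρ h0 h1)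
  have hAA := hA.prod hA
  rw [Measure.map_apply (by fun_prop) hAA, Measure.map_apply (by fun_prop) hAA,
    Measure.prod_apply ((by fun_prop : Measurable fun q : ℝ × ℝ × ℝ =>
      (√ρ * q.1 + √(1 - ρ) * q.2.1, √ρ * q.1 + √(1 - ρ) * q.2.2)) hAA)] at hm
  refine hm.trans (lintegral_congr fun z => ?_)
  rw [sq, ouProb, sq_sqrt h0, ← Measure.prod_prod]
  rfl

lemma ouProb_mul {A : Set ℝ} (hA : MeasurableSet A) {b c : ℝ} (hb : b ^ 2 ≤ 1) (hc : c ^ 2 ≤ 1)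
    (z : ℝ) :
    ouProb A (c * b) z = ∫⁻ x, ouProb A c (b * z + √(1 - b ^ 2) * x) ∂γ := by
  have hS : MeasurableSet {t : ℝ | c * b * z + t ∈ A} :=
    (by fun_prop : Measurable fun t : ℝ => c * b * z + t) hA
  have hm := congrArg (fun μ => μ {t : ℝ | c * b * z + t ∈ A})
    (map_linearCombination_stdGaussian (c * √(1 - b ^ 2)) √(1 - c ^ 2) √(1 - (c * b) ^ 2) (by
      rw [mul_pow, sq_sqrt (by linarith), sq_sqrt (by linarith), sq_sqrt (by nlinarith)]
      ring))
  rw [Measure.map_apply (by fun_prop) hS, Measure.map_apply (by fun_prop) hS,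
    Measure.prod_apply ((by fun_prop : Measurable fun p : ℝ × ℝ =>
      c * √(1 - b ^ 2) * p.1 + √(1 - c ^ 2) * p.2) hS)] at hm
  refine hm.symm.trans (lintegral_congr fun x => ?_)
  refine congrArg γ (Set.ext fun n => ?_)
  simp only [mem_preimage, mem_ofPred_eq]
  ring_nf

lemma sq_lintegral_le_lintegral_sq {α : Type*} [MeasurableSpace α] (μ : Measure α)
    [IsProbabilityMeasure μ] {f : α → ENNReal} (hf : AEMeasurable f μ) :
    (∫⁻ x, f x ∂μ) ^ 2 ≤ ∫⁻ x, f x ^ 2 ∂μ := by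
  have h := ENNReal.lintegral_mul_le_Lp_mul_Lq μ Real.HolderConjugate.two_two hf
    (aemeasurable_const (b := (1 : ENNReal)))
  simp only [Pi.mul_apply, mul_one, ENNReal.rpow_ofNat, one_pow, lintegral_const, measure_univ,
    ENNReal.one_rpow] at h
  calc _ ≤ ((∫⁻ x, f x ^ 2 ∂μ) ^ (1 / 2 : ℝ)) ^ 2 := by gcongr
    _ = _ := by
      rw [← ENNReal.rpow_natCast, ← ENNReal.rpow_mul]
      simp

lemma lintegral_ouProb_sq_le {A : Set ℝ} (hA : MeasurableSet A) {b c : ℝ} (hb : b ^ 2 ≤ 1)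
    (hc : c ^ 2 ≤ 1) :
    ∫⁻ z, ouProb A (c * b) z ^ 2 ∂γ ≤ ∫⁻ z, ouProb A c z ^ 2 ∂γ := by
  have hmeas := measurable_ouProb hA c
  have hrot := map_linearCombination_stdGaussian b √(1 - b ^ 2) 1
    (by rw [sq_sqrt (by linarith)]; ring)
  simp only [one_mul, Measure.map_id'] at hrot
  calc ∫⁻ z, ouProb A (c * b) z ^ 2 ∂γ
      ≤ ∫⁻ z, ∫⁻ x, ouProb A c (b * z + √(1 - b ^ 2) * x) ^ 2 ∂γ ∂γ := by
        refine lintegral_mono fun z => ?_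
        rw [ouProb_mul hA hb hc]
        exact sq_lintegral_le_lintegral_sq _ (by fun_prop)
    _ = ∫⁻ p, ouProb A c (b * p.1 + √(1 - b ^ 2) * p.2) ^ 2 ∂((γ).prod γ) := by
        rw [lintegral_prod _ (by fun_prop)]
    _ = ∫⁻ z, ouProb A c z ^ 2 ∂γ := by
        conv_rhs => rw [← hrot]
        rw [lintegral_map (by fun_prop) (by fun_prop)]

lemma correlated_square_mono {A : Set ℝ} (hA : MeasurableSet A) {ρ ρ' : ℝ} (h0 : 0 ≤ ρ')
    (hle : ρ' ≤ ρ) (h1 : ρ ≤ 1) :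
    ((γ).prod γ) {p : ℝ × ℝ | p.1 ∈ A ∧ ρ' * p.1 + √(1 - ρ' ^ 2) * p.2 ∈ A} ≤
      ((γ).prod γ) {p : ℝ × ℝ | p.1 ∈ A ∧ ρ * p.1 + √(1 - ρ ^ 2) * p.2 ∈ A} := by
  rcases (h0.trans hle).eq_or_lt with rfl | hpos
  · rw [le_antisymm hle h0]
  rw [correlated_square_eq_lintegral hA h0 (hle.trans h1),
    correlated_square_eq_lintegral hA hpos.le h1]
  have hfac : √ρ' = √ρ * √(ρ' / ρ) := by
    rw [← sqrt_mul hpos.le, mul_div_cancel₀ _ hpos.ne']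
  rw [hfac]
  refine lintegral_ouProb_sq_le hA ?_ ?_
  · rw [sq_sqrt (by positivity)]
    exact (div_le_one hpos).2 hle
  · rwa [sq_sqrt hpos.le]

lemma measurableSet_floor_div_eq (w : ℝ) (k : ℤ) : MeasurableSet {x : ℝ | ⌊x / w⌋ = k} :=
  (by fun_prop : Measurable fun x : ℝ => ⌊x / w⌋) (measurableSet_singleton k)

lemma collision_eq_tsum (w ρ : ℝ) :
    ((γ).prod γ) {p : ℝ × ℝ | ⌊p.1 / w⌋ = ⌊(ρ * p.1 + √(1 - ρ ^ 2) * p.2) / w⌋} =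
      ∑' k : ℤ, ((γ).prod γ) {p : ℝ × ℝ | p.1 ∈ {x : ℝ | ⌊x / w⌋ = k} ∧
        ρ * p.1 + √(1 - ρ ^ 2) * p.2 ∈ {x : ℝ | ⌊x / w⌋ = k}} := by
  rw [← measure_iUnion]
  · congr 1
    ext p
    simp [eq_comm]
  · intro i j hij
    refine Set.disjoint_left.2 fun p hi hj => hij ?_
    exact hi.1.symm.trans hj.1
  · intro k
    have hA := measurableSet_floor_div_eq w k
    exact (measurable_fst hA).inter ((by fun_prop :
      Measurable fun p : ℝ × ℝ => ρ * p.1 + √(1 - ρ ^ 2) * p.2) hA)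

lemma setOf_floor_div_eq {w : ℝ} (hw : 0 < w) (k : ℤ) :
    {x : ℝ | ⌊x / w⌋ = k} = Ico (k * w) ((k + 1) * w) := by
  ext x
  simp [Int.floor_eq_iff, le_div_iff₀ hw, div_lt_iff₀ hw]

lemma Phi_eq_cdf (x : ℝ) : Phi x = (γ).real (Iic x) := by
  rw [measureReal_def, gaussianReal_apply_eq_integral 0 one_ne_zero, ENNReal.toReal_ofReal
    (integral_nonneg fun t => gaussianPDFReal_nonneg _ _ _)]
  simp [Phi, stdPdf, gaussianPDFReal]

lemma stdGaussian_real_Ico {a b : ℝ} (h : a ≤ b) : (γ).real (Ico a b) = Phi b - Phi a := by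
  have : NullSingletonClass γ := nullSingletonClass_gaussianReal one_ne_zero
  rw [measureReal_congr (Ico_ae_eq_Ioc (μ := γ)), Phi_eq_cdf, Phi_eq_cdf,
    ← Iic_sdiff_Iic, measureReal_sdiff (Iic_subset_Iic.2 h) measurableSet_Iic]

lemma stdGaussian_real_Ico_neg (a b : ℝ) : (γ).real (Ico (-b) (-a)) = (γ).real (Ico a b) := by
  have : NullSingletonClass γ := nullSingletonClass_gaussianReal one_ne_zero
  have h : (γ).map (fun x => -x) = γ := by simp [gaussianReal_map_neg]
  conv_lhs => rw [← h]
  rw [map_measureReal_apply (by fun_prop) measurableSet_Ico, measureReal_congr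
    (Ico_ae_eq_Ioc (μ := γ))]
  congr 1
  ext x
  simp [and_comm]

lemma stdGaussian_cell_natCast {w : ℝ} (hw : 0 < w) (n : ℕ) :
    (γ).real {x : ℝ | ⌊x / w⌋ = (n : ℤ)} = Phi (((n : ℝ) + 1) * w) - Phi ((n : ℝ) * w) := by
  rw [setOf_floor_div_eq hw, stdGaussian_real_Ico (by nlinarith)]
  simp

lemma stdGaussian_cell_neg {w : ℝ} (hw : 0 < w) (n : ℕ) :
    (γ).real {x : ℝ | ⌊x / w⌋ = -((n : ℤ) + 1)} =
      Phi (((n : ℝ) + 1) * w) - Phi ((n : ℝ) * w) := by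
  rw [setOf_floor_div_eq hw, ← stdGaussian_real_Ico (by nlinarith), ← stdGaussian_real_Ico_neg]
  congr 2 <;> push_cast <;> ring

lemma tsum_int_eq_two_mul_tsum_nat {f : ℤ → ℝ} {g : ℕ → ℝ} (hf : Summable f)
    (hnat : ∀ n : ℕ, f n = g n) (hneg : ∀ n : ℕ, f (-((n : ℤ) + 1)) = g n) :
    ∑' k, f k = 2 * ∑' n, g n := by
  have h1 : Summable fun n : ℕ => f n := hf.comp_injective Nat.cast_injective
  have h2 : Summable fun n : ℕ => f (-((n : ℤ) + 1)) :=
    hf.comp_injective (i := fun n : ℕ => -((n : ℤ) + 1)) fun _ _ h => by simpa using h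
  rw [tsum_of_nat_of_neg_add_one h1 h2, two_mul, tsum_congr hnat, tsum_congr hneg]

lemma collision_zero_eq_tsum (w : ℝ) :
    ((γ).prod γ) {p : ℝ × ℝ | ⌊p.1 / w⌋ = ⌊((0 : ℝ) * p.1 + √(1 - (0 : ℝ) ^ 2) * p.2) / w⌋} =
      ∑' k : ℤ, γ {x : ℝ | ⌊x / w⌋ = k} ^ 2 := by
  rw [collision_eq_tsum]
  refine tsum_congr fun k => ?_
  rw [sq (γ _), ← Measure.prod_prod]
  congr 1
  ext p
  simp

lemma collision_zero_eq {w : ℝ} (hw : 0 < w) :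
    (((γ).prod γ)
        {p : ℝ × ℝ | ⌊p.1 / w⌋ = ⌊((0 : ℝ) * p.1 + √(1 - (0 : ℝ) ^ 2) * p.2) / w⌋}).toReal
      = 2 * ∑' i : ℕ, (Phi (((i : ℝ) + 1) * w) - Phi ((i : ℝ) * w)) ^ 2 := by
  have hsum := collision_zero_eq_tsum w
  have hfin : ∑' k : ℤ, γ {x : ℝ | ⌊x / w⌋ = k} ^ 2 ≠ ⊤ := by
    rw [← hsum]
    exact measure_ne_top _ _
  rw [hsum, ENNReal.tsum_toReal_eq fun k => ENNReal.pow_ne_top (measure_ne_top _ _)]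
  refine tsum_int_eq_two_mul_tsum_nat (ENNReal.summable_toReal hfin) (fun n => ?_) fun n => ?_
  · rw [ENNReal.toReal_pow, ← measureReal_def, stdGaussian_cell_natCast hw]
  · rw [ENNReal.toReal_pow, ← measureReal_def, stdGaussian_cell_neg hw]

/-- The collision probability at correlation ρ dominates that at ρ' whenever
ρ ≥ ρ' ≥ 0; in particular it is at least its value at ρ = 0, which equals
2∑(Φ((i+1)w)-Φ(iw))². -/
theorem stmt12 (w : ℝ) (hw : 0 < w) :
    (∀ ρ ρ' : ℝ, ρ ∈ Set.Ico (0 : ℝ) 1 → ρ' ∈ Set.Ico (0 : ℝ) 1 → ρ' ≤ ρ →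
      (((gaussianReal 0 1).prod (gaussianReal 0 1))
        {p : ℝ × ℝ | ⌊p.1 / w⌋ = ⌊(ρ' * p.1 + Real.sqrt (1 - ρ' ^ 2) * p.2) / w⌋}).toReal
      ≤ (((gaussianReal 0 1).prod (gaussianReal 0 1))
        {p : ℝ × ℝ | ⌊p.1 / w⌋ = ⌊(ρ * p.1 + Real.sqrt (1 - ρ ^ 2) * p.2) / w⌋}).toReal) ∧
    (((gaussianReal 0 1).prod (gaussianReal 0 1))
        {p : ℝ × ℝ | ⌊p.1 / w⌋ = ⌊((0 : ℝ) * p.1 + Real.sqrt (1 - (0 : ℝ) ^ 2) * p.2) / w⌋}).toReal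
      = 2 * ∑' i : ℕ, (Phi (((i : ℝ) + 1) * w) - Phi ((i : ℝ) * w)) ^ 2 := by
  refine ⟨fun ρ ρ' hρ hρ' hle => ENNReal.toReal_mono (measure_ne_top _ _) ?_, collision_zero_eq hw⟩
  rw [collision_eq_tsum, collision_eq_tsum]
  exact ENNReal.tsum_le_tsum fun k =>
    correlated_square_mono (measurableSet_floor_div_eq w k) hρ'.1 hle hρ.2.le
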